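/- Let v : ℝ^{m×n} → ℝ be quasiconvex and satisfy |v(s)| ≤ C(1+|s|^p) for all s, with C > 0 and 1 ≤ p < ∞. Then there is a constant α ≥ 0 such that for all s₁, s₂ ∈ ℝ^{m×n}, |v(s₁) - v(s₂)| ≤ α (1 + |s₁|^{p-1} + |s₂|^{p-1}) |s₁ - s₂|. -/

import Mathlib

open MeasureTheory Filter
open scoped RealInnerProductSpace
noncomputable section

/-- `ℝⁿ` with the Euclidean norm. -/
abbrev Vec (n : ℕ) := EuclideanSpace ℝ (Fin n)
/-- `ℝ^{m×n}` with the Euclidean (Frobenius) norm. -/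
abbrev Mat (m n : ℕ) := EuclideanSpace ℝ (Fin m × Fin n)

/-- The gradient (Jacobian) matrix of `u : ℝⁿ → ℝᵐ` at `x`. -/
noncomputable def gradMat {m n : ℕ} (u : Vec n → Vec m) (x : Vec n) : Mat m n :=
  (EuclideanSpace.equiv (Fin m × Fin n) ℝ).symm
    (fun p => fderiv ℝ u x (EuclideanSpace.single p.2 1) p.1)

/-- Morrey quasiconvexity: for every bounded (Lipschitz) test domain `Ω`, every
matrix `s₀` and every Lipschitz map `φ` compactly supported in `Ω` (i.e. `φ ∈ W^{1,∞}₀(Ω;ℝᵐ)`),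
`v(s₀)|Ω| ≤ ∫_Ω v(s₀ + ∇φ)`. -/
def IsQuasiconvex {m n : ℕ} (v : Mat m n → ℝ) : Prop :=
  ∀ (Ω : Set (Vec n)), IsOpen Ω → Bornology.IsBounded Ω →
    ∀ s₀ : Mat m n, ∀ φ : Vec n → Vec m,
      (∃ K : NNReal, LipschitzWith K φ) → tsupport φ ⊆ Ω →
        v s₀ * (volume Ω).toReal ≤ ∫ x in Ω, v (s₀ + gradMat φ x)


/-- The sup norm. -/
def NN {n : ℕ} (x : Vec n) : ℝ := ‖(EuclideanSpace.equiv (Fin n) ℝ) x‖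

theorem NN_cont {n : ℕ} : Continuous (NN (n := n)) := by unfold NN; fun_prop

theorem box_open {n : ℕ} (j : Fin n) (r : ℝ) :
    IsOpen {x : Vec n | 0 < x j ∧ ‖(EuclideanSpace.equiv (Fin n) ℝ) x‖ < r} := by
  have h1 : IsOpen {x : Vec n | 0 < x j} := isOpen_lt continuous_const (by fun_prop)
  have h2 : IsOpen {x : Vec n | NN x < r} := isOpen_lt NN_cont continuous_const
  exact h1.inter h2

/-- The test profile. -/
def psi {n : ℕ} (j : Fin n) (t L : ℝ) (x : Vec n) : ℝ :=
  max 0 (min (t * x j) (L * (1 - ‖(EuclideanSpace.equiv (Fin n) ℝ) x‖)))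

theorem psi_lip {n : ℕ} (j : Fin n) (t L : ℝ) : ∃ K, LipschitzWith K (psi j t L) := by
  have h1 : LipschitzWith _ (fun x : Vec n => t * x j) :=
    (t • (EuclideanSpace.proj j : Vec n →L[ℝ] ℝ)).lipschitz
  have h2 := lipschitzWith_one_norm.comp
    ((EuclideanSpace.equiv (Fin n) ℝ) : Vec n →L[ℝ] (Fin n → ℝ)).lipschitz
  have h3 := (L • (ContinuousLinearMap.id ℝ ℝ)).lipschitz.comp ((LipschitzWith.const (1:ℝ)).sub h2)
  exact ⟨_, (LipschitzWith.const (0:ℝ)).max (h1.min h3)⟩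

theorem gradMat_of {m n : ℕ} (ψ : Vec n → ℝ) (i : Fin m) (k : Fin n) (σ c : ℝ) (x : Vec n)
    (h : HasFDerivAt ψ (c • (EuclideanSpace.proj k : Vec n →L[ℝ] ℝ)) x) :
    gradMat (fun y => ψ y • (EuclideanSpace.single i σ : Vec m)) x
      = EuclideanSpace.single (i, k) (σ * c) := by
  have := (h.smul_const (EuclideanSpace.single i σ : Vec m)).fderiv
  ext q
  obtain ⟨a, b⟩ := q
  simp only [gradMat, this]
  by_cases ha : a = i
  · by_cases hb : b = k
    · subst ha hb; simp [mul_comm]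
    · have hb' : k ≠ b := fun h => hb h.symm
      simp [hb, hb']
  · by_cases hb : b = k
    · subst hb; simp [ha]
    · have hb' : k ≠ b := fun h => hb h.symm
      simp [hb, hb']

/-- The finite set of gradients. -/
def FF {m n : ℕ} (i : Fin m) (j : Fin n) (t L : ℝ) : Set (Mat m n) :=
  insert 0 (insert (EuclideanSpace.single (i, j) t)
    (Set.range (fun k : Fin n => (EuclideanSpace.single (i, k) L : Mat m n)) ∪
     Set.range (fun k : Fin n => (EuclideanSpace.single (i, k) (-L) : Mat m n))))

theorem FF_fin {m n : ℕ} (i : Fin m) (j : Fin n) (t L : ℝ) : (FF i j t L).Finite :=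
  (((Set.finite_range _).union (Set.finite_range _)).insert _).insert _

theorem FF_norm {m n : ℕ} (i : Fin m) (j : Fin n) (t L : ℝ) (htL : |t| ≤ L) (s : Mat m n)
    (hs : s ∈ FF i j t L) : ‖s‖ ≤ L := by
  have hL : 0 ≤ L := (abs_nonneg t).trans htL
  rcases hs with h | h | ⟨k, h⟩ | ⟨k, h⟩
  · simp [h, hL]
  · simpa [h] using htL
  · simp [← h, abs_of_nonneg hL]
  · simp [← h, abs_of_nonneg hL]

theorem psi_zero_grad {m n : ℕ} (i : Fin m) (j : Fin n) (t L σ : ℝ) (x : Vec n)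
    (hx : psi j t L x = 0) (hd : DifferentiableAt ℝ (psi j t L) x) :
    gradMat (fun y => psi j t L y • (EuclideanSpace.single i σ : Vec m)) x = 0 := by
  have hm : IsLocalMin (psi j t L) x := Eventually.of_forall fun y => by
    rw [hx]; exact le_max_left _ _
  have := hm.hasFDerivAt_eq_zero hd.hasFDerivAt
  have h0 : HasFDerivAt (psi j t L) ((0:ℝ) • (EuclideanSpace.proj j : Vec n →L[ℝ] ℝ)) x := by
    rw [zero_smul, ← this]; exact hd.hasFDerivAt
  rw [gradMat_of _ i j σ 0 x h0]; simp

theorem grad_nd {m n : ℕ} (i : Fin m) (ψ : Vec n → ℝ) (σ : ℝ) (hσ : σ ≠ 0) (x : Vec n)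
    (hd : ¬ DifferentiableAt ℝ ψ x) :
    gradMat (fun y => ψ y • (EuclideanSpace.single i σ : Vec m)) x = 0 := by
  have : ¬ DifferentiableAt ℝ (fun y => ψ y • (EuclideanSpace.single i σ : Vec m)) x := by
    intro h
    apply hd
    have h2 := ((σ⁻¹ • (EuclideanSpace.proj i : Vec m →L[ℝ] ℝ)).differentiableAt).comp x h
    have e : ((σ⁻¹ • (EuclideanSpace.proj i : Vec m →L[ℝ] ℝ)) ∘
        fun y => ψ y • (EuclideanSpace.single i σ : Vec m)) = ψ := by
      funext y
      simp
      field_simp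
    rwa [e] at h2
  ext q
  simp [gradMat, fderiv_zero_of_not_differentiableAt this]

theorem psi_zero_grad' {m n : ℕ} (i : Fin m) (j : Fin n) (t L σ : ℝ) (hσ : σ ≠ 0) (x : Vec n)
    (hx : psi j t L x = 0) :
    gradMat (fun y => psi j t L y • (EuclideanSpace.single i σ : Vec m)) x = 0 := by
  by_cases hd : DifferentiableAt ℝ (psi j t L) x
  · exact psi_zero_grad i j t L σ x hx hd
  · exact grad_nd i _ σ hσ x hd

theorem deriv_of_le {n : ℕ} (ψ : Vec n → ℝ) (k : Fin n) (a c : ℝ) (x : Vec n)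
    (hd : DifferentiableAt ℝ ψ x) (h : ∀ᶠ y in nhds x, ψ y ≤ a + c * y k)
    (hx : ψ x = a + c * x k) :
    HasFDerivAt ψ (c • (EuclideanSpace.proj k : Vec n →L[ℝ] ℝ)) x := by
  have hm : IsLocalMin (fun y => (a + (c • (EuclideanSpace.proj k : Vec n →L[ℝ] ℝ)) y) - ψ y) x := by
    filter_upwards [h] with y hy
    simp [hx]; linarith
  have h1 := (((c • (EuclideanSpace.proj k : Vec n →L[ℝ] ℝ)).hasFDerivAt (x := x)).const_add a).sub
    hd.hasFDerivAt
  have := hm.hasFDerivAt_eq_zero h1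
  rw [sub_eq_zero.1 this]
  exact hd.hasFDerivAt

theorem grad_mem {m n : ℕ} (i : Fin m) (j : Fin n) (t L σ : ℝ) (hσ : σ = 1 ∨ σ = -1)
    (hL : 0 < L) (x : Vec n) :
    gradMat (fun y => psi j t L y • (EuclideanSpace.single i σ : Vec m)) x ∈
      FF i j (σ * t) L := by
  have hσ0 : σ ≠ 0 := by rcases hσ with h | h <;> simp [h]
  by_cases hd : DifferentiableAt ℝ (psi j t L) x
  swap
  · rw [grad_nd i _ σ hσ0 x hd]; left; rfl
  by_cases hx : psi j t L x = 0
  · rw [psi_zero_grad i j t L σ x hx hd]; left; rfl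
  have hpos : 0 < psi j t L x := lt_of_le_of_ne (le_max_left _ _) (Ne.symm hx)
  have hev : ∀ᶠ y in nhds x, 0 < psi j t L y :=
    hd.continuousAt.eventually (lt_mem_nhds hpos)
  have key : ∀ y, 0 < psi j t L y →
      psi j t L y = min (t * y j) (L * (1 - ‖(EuclideanSpace.equiv (Fin n) ℝ) y‖)) := by
    intro y hy
    rcases max_choice 0 (min (t * y j) (L * (1 - ‖(EuclideanSpace.equiv (Fin n) ℝ) y‖))) with h | h
    · exact absurd h hy.ne'
    · exact h
  rcases min_choice (t * x j) (L * (1 - ‖(EuclideanSpace.equiv (Fin n) ℝ) x‖)) with h | h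
  · have := deriv_of_le (psi j t L) j 0 t x hd
      (by filter_upwards [hev] with y hy; rw [key y hy, zero_add]; exact min_le_left _ _)
      (by rw [key x hpos, h, zero_add])
    rw [gradMat_of _ i j σ t x this]
    right; left; rfl
  · obtain ⟨k, -, hk⟩ := Finset.exists_max_image Finset.univ (fun k => |x k|) ⟨j, Finset.mem_univ j⟩
    have hk' : ‖(EuclideanSpace.equiv (Fin n) ℝ) x‖ = |x k| := by
      apply le_antisymm
      · exact (pi_norm_le_iff_of_nonneg (abs_nonneg _)).2 fun b => hk b (Finset.mem_univ b)
      · exact norm_le_pi_norm ((EuclideanSpace.equiv (Fin n) ℝ) x) k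
    obtain ⟨τ, hτ, hτx⟩ : ∃ τ : ℝ, (τ = 1 ∨ τ = -1) ∧ |x k| = τ * x k := by
      rcases abs_choice (x k) with h | h
      · exact ⟨1, Or.inl rfl, by rw [h]; ring⟩
      · exact ⟨-1, Or.inr rfl, by rw [h]; ring⟩
    have := deriv_of_le (psi j t L) k L (-(L * τ)) x hd
      (by
        filter_upwards [hev] with y hy
        rw [key y hy]
        refine (min_le_right _ _).trans ?_
        have h1 : |y k| ≤ ‖(EuclideanSpace.equiv (Fin n) ℝ) y‖ :=
          norm_le_pi_norm ((EuclideanSpace.equiv (Fin n) ℝ) y) k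
        have h2 : τ * y k ≤ |y k| := by
          rcases hτ with h | h <;> rw [h]
          · simpa using le_abs_self _
          · simpa using neg_le_abs _
        have := mul_le_mul_of_nonneg_left (h2.trans h1) hL.le
        linarith)
      (by rw [key x hpos, h, hk', hτx]; ring)
    rw [gradMat_of _ i k σ _ x this]
    right; right
    rcases hσ with rfl | rfl <;> rcases hτ with rfl | rfl
    · right; exact ⟨k, by simp⟩
    · left; exact ⟨k, by simp⟩
    · left; exact ⟨k, by simp⟩
    · right; exact ⟨k, by simp⟩

/-- The half cube. -/
def KK {n : ℕ} (j : Fin n) : Set (Vec n) :=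
  {x | 0 < x j ∧ ‖(EuclideanSpace.equiv (Fin n) ℝ) x‖ < 1}

theorem KK_open {n : ℕ} (j : Fin n) : IsOpen (KK j) :=
  box_open j 1

theorem psi_off {n : ℕ} (j : Fin n) (t L : ℝ) (ht : 0 < t) (hL : 0 < L) (x : Vec n)
    (hx : x ∉ KK j) : psi j t L x = 0 := by
  apply max_eq_left
  by_contra! h
  obtain ⟨h1, h2⟩ := lt_min_iff.1 h
  exact hx ⟨pos_of_mul_pos_right h1 ht.le, by
    have := pos_of_mul_pos_right h2 hL.le
    linarith⟩

theorem grad_core {m n : ℕ} (i : Fin m) (j : Fin n) (t L σ : ℝ) (ht : 0 < t)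
    (htL : t < L) (x : Vec n) (hx : 0 < x j ∧ ‖(EuclideanSpace.equiv (Fin n) ℝ) x‖ < 1 - t / L) :
    gradMat (fun y => psi j t L y • (EuclideanSpace.single i σ : Vec m)) x
      = EuclideanSpace.single (i, j) (σ * t) := by
  have hL : 0 < L := ht.trans htL
  have ho : IsOpen {x : Vec n | 0 < x j ∧ ‖(EuclideanSpace.equiv (Fin n) ℝ) x‖ < 1 - t / L} :=
    box_open j _
  apply gradMat_of
  have h1 := (t • (EuclideanSpace.proj j : Vec n →L[ℝ] ℝ)).hasFDerivAt (x := x)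
  refine h1.congr_of_eventuallyEq ?_
  filter_upwards [ho.mem_nhds hx] with y hy
  obtain ⟨hy1, hy2⟩ := hy
  have h3 : |y j| ≤ ‖(EuclideanSpace.equiv (Fin n) ℝ) y‖ :=
    norm_le_pi_norm ((EuclideanSpace.equiv (Fin n) ℝ) y) j
  have h4 := le_abs_self (y j)
  have h5 : y j < 1 := by
    have : 0 < t / L := div_pos ht hL
    linarith
  have h6 : t ≤ L * (1 - ‖(EuclideanSpace.equiv (Fin n) ℝ) y‖) := by
    have := mul_le_mul_of_nonneg_left (show t / L ≤ 1 - ‖(EuclideanSpace.equiv (Fin n) ℝ) y‖ by linarith) hL.le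
    rwa [mul_div_cancel₀ _ hL.ne'] at this
  have h7 : t * y j ≤ t := by nlinarith
  unfold psi
  rw [min_eq_left (h7.trans h6), max_eq_right (by positivity)]
  simp

theorem gradMat_meas {m n : ℕ} (φ : Vec n → Vec m) : Measurable (gradMat φ) := by
  unfold gradMat
  refine (EuclideanSpace.equiv (Fin m × Fin n) ℝ).symm.continuous.measurable.comp ?_
  refine measurable_pi_iff.2 fun q => ?_
  exact (EuclideanSpace.proj (𝕜 := ℝ) q.1 : Vec m →L[ℝ] ℝ).continuous.measurable.comp
    (measurable_fderiv_apply_const ℝ φ _)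

theorem comp_meas {m n : ℕ} (v : Mat m n → ℝ) (s : Mat m n) (g : Vec n → Mat m n)
    (hg : Measurable g) (F : Set (Mat m n)) (hF : F.Finite) (h : ∀ x, g x ∈ F) :
    Measurable (fun x => v (s + g x)) := by
  classical
  have h1 : Measurable (F.indicator (fun q => v (s + q))) := by
    refine (measurable_const (a := (0:ℝ))).measurable_of_countable_ne (hF.countable.mono ?_)
    intro q hq
    by_contra hn
    exact hq (by simp [hn])
  have := h1.comp hg
  convert this using 1
  ext x
  simp [h x]

open scoped Pointwise in
theorem step {m n : ℕ} (v : Mat m n → ℝ) (hqc : IsQuasiconvex v) (s : Mat m n) (i : Fin m)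
    (j : Fin n) (t L σ M : ℝ) (hσ : σ = 1 ∨ σ = -1) (ht : 0 < t) (htL : t < L)
    (hM : ∀ q, ‖q‖ ≤ L → |v (s + q)| ≤ M) :
    v s - v (s + EuclideanSpace.single (i, j) (σ * t)) ≤ 4 * M * n * (t / L) := by
  have hL : 0 < L := ht.trans htL
  have hσ0 : σ ≠ 0 := by rcases hσ with h | h <;> simp [h]
  have hε0 : 0 < t / L := div_pos ht hL
  have hε1 : t / L < 1 := (div_lt_one hL).2 htL
  set r : ℝ := 1 - t / L with hr
  have hr0 : 0 < r := by linarith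
  set φ : Vec n → Vec m := fun y => psi j t L y • (EuclideanSpace.single i σ : Vec m) with hφ
  set s2 := s + EuclideanSpace.single (i, j) (σ * t) with hs2
  let N : Vec n → ℝ := fun x => ‖(EuclideanSpace.equiv (Fin n) ℝ) x‖
  have hNc : Continuous N := by fun_prop
  set U : Set (Vec n) := {x | 0 < x j ∧ ‖(EuclideanSpace.equiv (Fin n) ℝ) x‖ < r} with hU
  have hUo : IsOpen U :=
    box_open j _
  have hUK : U ⊆ KK j := fun x hx => ⟨hx.1, by have := hx.2; linarith⟩
  set Ω : Set (Vec n) := {x | N x < 2} with hΩ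
  have hΩo : IsOpen Ω := isOpen_lt hNc continuous_const
  have hΩb : Bornology.IsBounded Ω := by
    have h1 : Ω ⊆ (EuclideanSpace.equiv (Fin n) ℝ).symm '' (Metric.closedBall 0 2) := by
      intro x hx
      refine ⟨(EuclideanSpace.equiv (Fin n) ℝ) x, ?_, by simp⟩
      rw [mem_closedBall_zero_iff]
      exact le_of_lt hx
    exact (((isCompact_closedBall (0 : Fin n → ℝ) 2).image
      (EuclideanSpace.equiv (Fin n) ℝ).symm.continuous).isBounded).subset h1
  have hKΩ : KK j ⊆ Ω := fun x hx => by
    have := hx.2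
    show ‖(EuclideanSpace.equiv (Fin n) ℝ) x‖ < 2
    linarith
  have hΩf : volume Ω < ⊤ := hΩb.measure_lt_top
  have hKf : volume (KK j) < ⊤ := (measure_mono hKΩ).trans_lt hΩf
  have hUf : volume U < ⊤ := (measure_mono hUK).trans_lt hKf
  have hsupp : tsupport φ ⊆ Ω := by
    have h1 : tsupport φ ⊆ {x | N x ≤ 1} := by
      refine closure_minimal ?_ (isClosed_le hNc continuous_const)
      intro x hx
      by_contra hn
      apply hx
      have : x ∉ KK j := fun h => hn (le_of_lt h.2)
      simp [hφ, psi_off j t L ht hL x this]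
    intro x hx
    have := h1 hx
    simp only [Set.mem_ofPred_eq] at this
    show N x < 2
    linarith
  have hlip : ∃ K : NNReal, LipschitzWith K φ := by
    obtain ⟨K, hK⟩ := psi_lip j t L
    exact ⟨_, (ContinuousLinearMap.toSpanSingleton ℝ (EuclideanSpace.single i σ : Vec m)).lipschitz.comp hK⟩
  have hq := hqc Ω hΩo hΩb s φ hlip hsupp
  have hmem : ∀ x, gradMat φ x ∈ FF i j (σ * t) L := grad_mem i j t L σ hσ hL
  have hst : |σ * t| ≤ L := by
    rcases hσ with h | h <;> simp [h, abs_of_pos ht, htL.le]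
  have hb : ∀ x, |v (s + gradMat φ x)| ≤ M := fun x => hM _ (FF_norm _ _ _ _ hst _ (hmem x))
  have hmeas : Measurable (fun x => v (s + gradMat φ x)) :=
    comp_meas v s _ (gradMat_meas φ) _ (FF_fin _ _ _ _) hmem
  have hvs : |v s| ≤ M := by simpa using hM 0 (by simpa using hL.le)
  have hvs2 : |v s2| ≤ M := hM _ (by simpa using hst)
  have hM0 : 0 ≤ M := (abs_nonneg _).trans hvs
  have : IsFiniteMeasure (volume.restrict Ω) := ⟨by simpa using hΩf⟩
  have hint : Integrable (fun x => v (s + gradMat φ x)) (volume.restrict Ω) :=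
    Integrable.of_bound hmeas.aestronglyMeasurable M (Eventually.of_forall hb)
  have hKm := (KK_open j).measurableSet
  have hUm := hUo.measurableSet
  have hpt : ∀ x, v (s + gradMat φ x) ≤ v s + (U.indicator (fun _ => v s2 - v s) x +
      (KK j \ U).indicator (fun _ => 2 * M) x) := by
    intro x
    by_cases hxU : x ∈ U
    · have : gradMat φ x = EuclideanSpace.single (i, j) (σ * t) := grad_core i j t L σ ht htL x hxU
      simp [hxU, this, hs2]
    · by_cases hxK : x ∈ KK j
      · have h1 := abs_le.1 (hb x)
        have h2 := abs_le.1 hvs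
        simp [hxU, hxK]; linarith
      · have : gradMat φ x = 0 := psi_zero_grad' i j t L σ hσ0 x (psi_off j t L ht hL x hxK)
        simp [hxU, hxK, this]
  have hi1 : Integrable (U.indicator (fun _ => v s2 - v s)) (volume.restrict Ω) :=
    (integrable_const _).indicator hUm
  have hi2 : Integrable ((KK j \ U).indicator (fun _ => 2 * M)) (volume.restrict Ω) :=
    (integrable_const _).indicator (hKm.diff hUm)
  have hle := integral_mono (μ := volume.restrict Ω) hint
    ((integrable_const (v s)).add (hi1.add hi2)) hpt
  have hrU : (volume.restrict Ω).real U = volume.real U := by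
    rw [measureReal_restrict_apply hUm, Set.inter_eq_left.2 (hUK.trans hKΩ)]
  have hrK : (volume.restrict Ω).real (KK j \ U) = volume.real (KK j) - volume.real U := by
    rw [measureReal_restrict_apply (hKm.diff hUm),
      Set.inter_eq_left.2 (Set.sdiff_subset.trans hKΩ), measureReal_sdiff hUK hUm hKf.ne]
  have hcalc : ∫ x in Ω, (v s + (U.indicator (fun _ => v s2 - v s) x +
      (KK j \ U).indicator (fun _ => 2 * M) x)) = v s * (volume Ω).toReal +
      ((v s2 - v s) * volume.real U + 2 * M * (volume.real (KK j) - volume.real U)) := by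
    have e1 := integral_add (integrable_const (μ := volume.restrict Ω) (v s)) (hi1.add hi2)
    simp only [Pi.add_apply] at e1
    rw [e1, integral_add hi1 hi2,
      integral_indicator_const _ hUm, integral_indicator_const _ (hKm.diff hUm), hrU, hrK]
    simp [Measure.real, mul_comm]
  have hfin : 0 ≤ (v s2 - v s) * volume.real U +
      2 * M * (volume.real (KK j) - volume.real U) := by
    have := hq.trans (hle.trans_eq hcalc)
    linarith
  have hUvol : volume.real U = r ^ n * volume.real (KK j) := by
    have h1 : U = r • KK j := by
      ext x
      rw [Set.mem_smul_set_iff_inv_smul_mem₀ hr0.ne']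
      have e1 : (0 < x j) ↔ 0 < (r⁻¹ • x) j := by
        simp [hr0]
      have e2 : ‖(EuclideanSpace.equiv (Fin n) ℝ) (r⁻¹ • x)‖
          = r⁻¹ * ‖(EuclideanSpace.equiv (Fin n) ℝ) x‖ := by
        rw [map_smul, norm_smul, Real.norm_of_nonneg (inv_nonneg.2 hr0.le)]
      simp only [hU, KK, Set.mem_ofPred_eq, e2, ← e1]
      rw [inv_mul_lt_iff₀ hr0, mul_one]
    rw [h1, Measure.real, Measure.addHaar_smul, ENNReal.toReal_mul,
      ENNReal.toReal_ofReal (abs_nonneg _), abs_of_nonneg (by positivity)]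
    simp [Measure.real]
  have hKpos : 0 < volume.real (KK j) := by
    refine ENNReal.toReal_pos ?_ hKf.ne
    refine ((KK_open j).measure_pos volume ⟨(EuclideanSpace.equiv (Fin n) ℝ).symm (fun _ => 1/2), ?_, ?_⟩).ne'
    · simp
    · simp only [ContinuousLinearEquiv.apply_symm_apply]
      refine (pi_norm_const_le _).trans_lt ?_
      norm_num
  have hbern : 1 - n * (t / L) ≤ r ^ n := by
    have := one_add_mul_le_pow (a := -(t / L)) (by linarith) n
    rw [hr, sub_eq_add_neg 1 (t / L)]
    linarith
  have hd : v s - v s2 ≤ 2 * M := by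
    have := abs_le.1 hvs; have := abs_le.1 hvs2; linarith
  rw [hUvol] at hfin
  have h8 : 0 ≤ (v s2 - v s) * r ^ n + 2 * M * (1 - r ^ n) := by
    refine nonneg_of_mul_nonneg_left (b := volume.real (KK j)) ?_ hKpos
    linarith
  have h9 : r ^ n ≤ 1 := pow_le_one₀ hr0.le (by linarith)
  have h10 : (v s - v s2) * (1 - r ^ n) ≤ 2 * M * (1 - r ^ n) :=
    mul_le_mul_of_nonneg_right hd (by linarith)
  have h11 : 4 * M * (1 - r ^ n) ≤ 4 * M * (n * (t / L)) :=
    mul_le_mul_of_nonneg_left (by linarith) (by linarith)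
  linarith

theorem step2 {m n : ℕ} (p C : ℝ) (hp : 1 ≤ p) (hC : 0 < C)
    (v : Mat m n → ℝ) (hqc : IsQuasiconvex v)
    (hgrowth : ∀ s : Mat m n, |v s| ≤ C * (1 + ‖s‖ ^ p)) (s : Mat m n) (q : Fin m × Fin n)
    (τ L : ℝ) (hL : 1 ≤ L) (hs : ‖s‖ ≤ L) (hτ : |τ| < L) :
    v s - v (s + EuclideanSpace.single q τ) ≤ 4 * n * C * (1 + 2 ^ p) * (L ^ (p - 1) * |τ|) := by
  have hL0 : 0 < L := by linarith
  rcases eq_or_ne τ 0 with rfl | h0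
  · have : (EuclideanSpace.single q 0 : Mat m n) = 0 := by ext a; simp
    simp [this]
  obtain ⟨σ, hσ, hστ⟩ : ∃ σ : ℝ, (σ = 1 ∨ σ = -1) ∧ σ * |τ| = τ := by
    rcases abs_choice τ with h | h
    · exact ⟨1, Or.inl rfl, by rw [h]; ring⟩
    · exact ⟨-1, Or.inr rfl, by rw [h]; ring⟩
  have h := step v hqc s q.1 q.2 |τ| L σ (C * (1 + (2 * L) ^ p)) hσ (abs_pos.2 h0) hτ
    (by
      intro w hw
      refine (hgrowth _).trans ?_
      have : ‖s + w‖ ≤ 2 * L := (norm_add_le _ _).trans (by linarith)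
      gcongr)
  rw [hστ] at h
  refine h.trans ?_
  have e : L ^ p = L ^ (p - 1) * L := by
    rw [← Real.rpow_add_one hL0.ne']; simp
  have h1 : (1:ℝ) ≤ L ^ p := Real.one_le_rpow hL (by linarith)
  have h2 : 1 + (2 * L) ^ p ≤ (1 + 2 ^ p) * L ^ p := by
    rw [Real.mul_rpow (by norm_num) hL0.le]; linarith
  calc 4 * (C * (1 + (2 * L) ^ p)) * n * (|τ| / L)
      ≤ 4 * (C * ((1 + 2 ^ p) * L ^ p)) * n * (|τ| / L) := by gcongr
    _ = _ := by rw [e]; field_simp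

theorem step3 {m n : ℕ} (p C : ℝ) (hp : 1 ≤ p) (hC : 0 < C)
    (v : Mat m n → ℝ) (hqc : IsQuasiconvex v)
    (hgrowth : ∀ s : Mat m n, |v s| ≤ C * (1 + ‖s‖ ^ p)) (s : Mat m n) (q : Fin m × Fin n)
    (τ L : ℝ) (hL : 1 ≤ L) (hs : ‖s‖ ≤ L) (hs' : ‖s + EuclideanSpace.single q τ‖ ≤ L)
    (hτ : |τ| < L) :
    |v s - v (s + EuclideanSpace.single q τ)| ≤
      4 * n * C * (1 + 2 ^ p) * (L ^ (p - 1) * |τ|) := by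
  have h1 := step2 p C hp hC v hqc hgrowth s q τ L hL hs hτ
  have h2 := step2 p C hp hC v hqc hgrowth (s + EuclideanSpace.single q τ) q (-τ) L hL hs'
    (by simpa using hτ)
  have e : s + EuclideanSpace.single q τ + EuclideanSpace.single q (-τ) = s := by
    ext a
    by_cases h : a = q <;> simp [h]
  rw [e, abs_neg] at h2
  rw [abs_le]
  constructor <;> linarith

/-- Interpolating matrix. -/
def mix {m n : ℕ} (s₁ s₂ : Mat m n) (T : Finset (Fin m × Fin n)) : Mat m n :=
  WithLp.toLp 2 (fun q => if q ∈ T then s₂ q else s₁ q)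

theorem mix_norm {m n : ℕ} (s₁ s₂ : Mat m n) (T : Finset (Fin m × Fin n)) :
    ‖mix s₁ s₂ T‖ ≤ ‖s₁‖ + ‖s₂‖ := by
  have h : ‖mix s₁ s₂ T‖ ^ 2 ≤ ‖s₁‖ ^ 2 + ‖s₂‖ ^ 2 := by
    rw [EuclideanSpace.norm_sq_eq, EuclideanSpace.norm_sq_eq, EuclideanSpace.norm_sq_eq,
      ← Finset.sum_add_distrib]
    refine Finset.sum_le_sum fun q _ => ?_
    by_cases hq : q ∈ T <;> simp [mix, hq, sq_nonneg]
  refine abs_le_of_sq_le_sq' ?_ (by positivity) |>.2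
  nlinarith [norm_nonneg s₁, norm_nonneg s₂]

theorem tele {m n : ℕ} (p C : ℝ) (hp : 1 ≤ p) (hC : 0 < C)
    (v : Mat m n → ℝ) (hqc : IsQuasiconvex v)
    (hgrowth : ∀ s : Mat m n, |v s| ≤ C * (1 + ‖s‖ ^ p)) (s₁ s₂ : Mat m n)
    (T : Finset (Fin m × Fin n)) :
    |v s₁ - v (mix s₁ s₂ T)| ≤ T.card * (4 * n * C * (1 + 2 ^ p) *
      ((1 + ‖s₁‖ + ‖s₂‖) ^ (p - 1) * ‖s₁ - s₂‖)) := by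
  induction T using Finset.induction_on with
  | empty => 
    have : mix s₁ s₂ ∅ = s₁ := by ext q; simp [mix]
    simp [this]
  | insert q T hq ih =>
    have n1 := norm_nonneg s₁
    have n2 := norm_nonneg s₂
    have e : mix s₁ s₂ (insert q T) = mix s₁ s₂ T + EuclideanSpace.single q (s₂ q - s₁ q) := by
      ext a
      by_cases h : a = q
      · subst h; simp [mix, hq]
      · simp [mix, h]
    have hτ : |s₂ q - s₁ q| ≤ ‖s₁ - s₂‖ := by
      have := PiLp.norm_apply_le (s₁ - s₂) q
      rwa [PiLp.sub_apply, Real.norm_eq_abs, abs_sub_comm] at this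
    have hτ' := norm_sub_le s₁ s₂
    have h := step3 p C hp hC v hqc hgrowth (mix s₁ s₂ T) q (s₂ q - s₁ q) (1 + ‖s₁‖ + ‖s₂‖)
      (by linarith) ((mix_norm _ _ _).trans (by linarith))
      (by rw [← e]; exact (mix_norm _ _ _).trans (by linarith)) (by linarith)
    rw [← e] at h
    have h2 : 4 * n * C * (1 + 2 ^ p) * ((1 + ‖s₁‖ + ‖s₂‖) ^ (p - 1) * |s₂ q - s₁ q|) ≤
        4 * n * C * (1 + 2 ^ p) * ((1 + ‖s₁‖ + ‖s₂‖) ^ (p - 1) * ‖s₁ - s₂‖) := by gcongr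
    have h3 := abs_sub_le (v s₁) (v (mix s₁ s₂ T)) (v (mix s₁ s₂ (insert q T)))
    rw [Finset.card_insert_of_notMem hq]
    push_cast
    linarith

theorem pow_bd (a b r : ℝ) (ha : 0 ≤ a) (hb : 0 ≤ b) (hr : 0 ≤ r) :
    (1 + a + b) ^ r ≤ 3 ^ r * (1 + a ^ r + b ^ r) := by
  have ha' := Real.rpow_nonneg ha r
  have hb' := Real.rpow_nonneg hb r
  have key : ∀ c : ℝ, 0 ≤ c → c ^ r ≤ 1 + a ^ r + b ^ r → 1 + a + b ≤ 3 * c →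
      (1 + a + b) ^ r ≤ 3 ^ r * (1 + a ^ r + b ^ r) := by
    intro c hc h1 h2
    refine (Real.rpow_le_rpow (by positivity) h2 hr).trans ?_
    rw [Real.mul_rpow (by norm_num) hc]
    gcongr
  by_cases h1 : a ≤ 1 ∧ b ≤ 1
  · exact key 1 zero_le_one (by simp; linarith) (by linarith [h1.1, h1.2])
  · rcases le_total a b with h | h
    · refine key b hb (by linarith) ?_
      by_contra hn
      exact h1 ⟨by linarith, by linarith⟩
    · refine key a ha (by linarith) ?_
      by_contra hn
      exact h1 ⟨by linarith, by linarith⟩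

/-- a quasiconvex function with `p`-growth is `p`-Lipschitz. -/
theorem stmt0 {m n : ℕ} (p C : ℝ) (hp : 1 ≤ p) (hC : 0 < C)
    (v : Mat m n → ℝ) (hqc : IsQuasiconvex v)
    (hgrowth : ∀ s : Mat m n, |v s| ≤ C * (1 + ‖s‖ ^ p)) :
    ∃ α : ℝ, 0 ≤ α ∧ ∀ s₁ s₂ : Mat m n,
      |v s₁ - v s₂| ≤ α * (1 + ‖s₁‖ ^ (p - 1) + ‖s₂‖ ^ (p - 1)) * ‖s₁ - s₂‖ := by

  refine ⟨(m * n : ℕ) * (4 * n * C * (1 + 2 ^ p)) * 3 ^ (p - 1), by positivity, fun s₁ s₂ => ?_⟩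
  have h := tele p C hp hC v hqc hgrowth s₁ s₂ Finset.univ
  have e : mix s₁ s₂ Finset.univ = s₂ := by ext q; simp [mix]
  have hb := pow_bd ‖s₁‖ ‖s₂‖ (p - 1) (norm_nonneg _) (norm_nonneg _) (by linarith)
  rw [e] at h
  refine h.trans ?_
  have hc : (Finset.univ : Finset (Fin m × Fin n)).card = m * n := by simp
  rw [hc]
  calc ((m * n : ℕ) : ℝ) * (4 * n * C * (1 + 2 ^ p) *
        ((1 + ‖s₁‖ + ‖s₂‖) ^ (p - 1) * ‖s₁ - s₂‖))
      ≤ ((m * n : ℕ) : ℝ) * (4 * n * C * (1 + 2 ^ p) *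
        ((3 ^ (p - 1) * (1 + ‖s₁‖ ^ (p - 1) + ‖s₂‖ ^ (p - 1))) * ‖s₁ - s₂‖)) := by gcongr
    _ = _ := by ring
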